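/- Let d ≥ 2 and R > 0. For every x ∈ ℝ^d with ‖x‖ < R, the interior Poisson kernel integrates to one over the sphere: ∫_{Σ_R} (R² − ‖x‖²)/(Ω_d R ‖x − η‖^d) σ(dη) = 1. -/

import Mathlib

open MeasureTheory

/-- The surface area `Ω_d` of the unit sphere in `ℝ^d`, i.e. the `(d-1)`-dimensional Hausdorff
measure of `{x : ‖x‖ = 1}`. -/
noncomputable def unitSphereArea (d : ℕ) : ℝ :=
  (μH[(d : ℝ) - 1] (Metric.sphere (0 : EuclideanSpace ℝ (Fin d)) 1)).toReal

/-!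
Integrate `(‖y‖² - ‖x‖²) / ‖x - y‖ ^ d` over a spherical shell `a < ‖y‖ ≤ b` with `‖x‖ < a`, in
polar coordinates centred at `x`. The Jacobian `r ^ (d - 1)` cancels the denominator and leaves
`r + 2⟪x, ω⟫`; the ray in direction `ω` crosses the two bounding spheres at radii given by the power
of the point `x`, so the radial integral is `(b² - a²) / 2` plus a term odd in `ω`. In polar
coordinates centred at `0` the same integral is that of `r ^ (d - 1)` times the spherical integral
of the kernel, and differentiating in the outer radius gives the latter on each sphere.

Polar coordinates produce the cone measure on the unit sphere. It is proportional to the Hausdorff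
measure since a finite rotation-invariant measure on a sphere is unique up to scaling: by the
Besicovitch differentiation theorem its density with respect to another such measure is constant.
-/

open Set Metric Module
open scoped Pointwise ENNReal

section RotationInvariant

variable {E : Type*} [NormedAddCommGroup E] [InnerProductSpace ℝ E] [MeasurableSpace E]
  {μ ν : Measure E}

/-- Invariance of a measure on `E` under the orthogonal group of `E`, the property that
characterises surface measure on a sphere up to scaling. -/
def RotationInvariant (μ : Measure E) : Prop :=
  ∀ e : E ≃ₗᵢ[ℝ] E, MeasurePreserving e μ μ

namespace RotationInvariant

lemma add (hμ : RotationInvariant μ) (hν : RotationInvariant ν) : RotationInvariant (μ + ν) :=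
  fun e => (hμ e).add_measure (hν e)

variable [BorelSpace E]

lemma measure_closedBall_eq_of_norm_eq (hμ : RotationInvariant μ) {x y : E} (hxy : ‖x‖ = ‖y‖)
    (r : ℝ) : μ (closedBall x r) = μ (closedBall y r) := by
  obtain ⟨e, he⟩ : ∃ e : E ≃ₗᵢ[ℝ] E, e x = y :=
    ⟨(ℝ ∙ (x - y))ᗮ.reflection, Submodule.reflection_sub hxy⟩
  rw [← (hμ e).measure_preimage (measurableSet_closedBall (x := y)).nullMeasurableSet,
    e.preimage_closedBall, ← he, e.symm_apply_apply]

lemma integral_eq_zero_of_odd {F : Type*} [NormedAddCommGroup F] [NormedSpace ℝ F]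
    (hμ : RotationInvariant μ) {f : E → F} (hf : f.Odd) : ∫ x, f x ∂μ = 0 := by
  have hneg : ∫ x, f (-x) ∂μ = ∫ x, f x ∂μ :=
    (hμ (.neg ℝ)).integral_comp (LinearIsometryEquiv.neg ℝ).toHomeomorph.measurableEmbedding f
  have : IsAddTorsionFree F := .of_isTorsionFree ℝ F
  simpa only [hf _, integral_neg, neg_eq_self] using hneg

variable [FiniteDimensional ℝ E] [IsFiniteMeasure μ] [IsFiniteMeasure ν] [NeZero μ] {r : ℝ}

lemma normalized_eq_of_absolutelyContinuous (hμ : RotationInvariant μ) (hν : RotationInvariant ν)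
    (hμν : μ ≪ ν) (hsphere : ∀ᵐ x ∂ν, ‖x‖ = r) : (μ univ)⁻¹ • μ = (ν univ)⁻¹ • ν := by
  have : NeZero ν := ⟨fun hν0 => NeZero.ne μ (Measure.absolutelyContinuous_zero_iff.1 (hν0 ▸ hμν))⟩
  -- The density of `μ` at a point is a limit of ratios of masses of balls around that point, and
  -- these masses depend only on the norm of the centre.
  have hdensity := (Besicovitch.ae_tendsto_rnDeriv μ ν).and hsphere
  obtain ⟨x₀, hlim₀, hx₀⟩ := hdensity.exists
  have hconst : μ.rnDeriv ν =ᵐ[ν] fun _ => μ.rnDeriv ν x₀ := by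
    filter_upwards [hdensity] with x ⟨hlim, hx⟩
    refine tendsto_nhds_unique hlim ?_
    have hnorm : ‖x‖ = ‖x₀‖ := hx.trans hx₀.symm
    simpa only [hμ.measure_closedBall_eq_of_norm_eq hnorm,
      hν.measure_closedBall_eq_of_norm_eq hnorm] using hlim₀
  have hsmul : μ = μ.rnDeriv ν x₀ • ν := by
    rw [← withDensity_const, ← withDensity_congr_ae hconst, Measure.withDensity_rnDeriv_eq μ ν hμν]
  generalize μ.rnDeriv ν x₀ = c at hsmul
  have hc : c * ν univ = μ univ := by rw [hsmul, Measure.smul_apply, smul_eq_mul]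
  have hν0 : ν univ ≠ 0 := NeZero.ne _
  rw [hsmul, Measure.smul_apply, smul_eq_mul, smul_smul]
  congr 1
  have hc0 : c ≠ 0 := by rintro rfl; exact NeZero.ne (μ univ) (by simpa using hc.symm)
  have hctop : c ≠ ∞ := by
    rintro rfl
    exact measure_ne_top μ univ (by rw [← hc, ENNReal.top_mul hν0])
  rw [ENNReal.mul_inv (.inl hc0) (.inl hctop), mul_right_comm, ENNReal.inv_mul_cancel hc0 hctop,
    one_mul]

theorem normalized_eq [NeZero ν] (hμ : RotationInvariant μ) (hν : RotationInvariant ν)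
    (hμr : ∀ᵐ x ∂μ, ‖x‖ = r) (hνr : ∀ᵐ x ∂ν, ‖x‖ = r) : (μ univ)⁻¹ • μ = (ν univ)⁻¹ • ν := by
  have hsum : ∀ᵐ x ∂(μ + ν), ‖x‖ = r := ae_add_measure_iff.2 ⟨hμr, hνr⟩
  calc (μ univ)⁻¹ • μ = ((μ + ν) univ)⁻¹ • (μ + ν) :=
        hμ.normalized_eq_of_absolutelyContinuous (hμ.add hν)
          (Measure.absolutelyContinuous_of_le (Measure.le_add_right le_rfl)) hsum
    _ = (ν univ)⁻¹ • ν :=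
        (hν.normalized_eq_of_absolutelyContinuous (hμ.add hν)
          (Measure.absolutelyContinuous_of_le (Measure.le_add_left le_rfl)) hsum).symm

end RotationInvariant

end RotationInvariant

section ToSphere

variable {E : Type*} [NormedAddCommGroup E] [InnerProductSpace ℝ E] [FiniteDimensional ℝ E]
  [MeasurableSpace E] [BorelSpace E]

lemma rotationInvariant_map_toSphere :
    RotationInvariant ((volume : Measure E).toSphere.map Subtype.val) := by
  refine fun e => ⟨e.continuous.measurable, ?_⟩
  have hcone (A : Set E) (hA : MeasurableSet A) :
      (volume : Measure E).toSphere.map Subtype.val A =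
        finrank ℝ E * volume (Ioo (0 : ℝ) 1 • (sphere (0 : E) 1 ∩ A)) := by
    rw [Measure.map_apply measurable_subtype_coe hA,
      Measure.toSphere_apply' _ (measurable_subtype_coe hA), Subtype.image_preimage_coe]
  ext A hA
  have hpreimage : Ioo (0 : ℝ) 1 • (sphere (0 : E) 1 ∩ e ⁻¹' A) =
      e ⁻¹' (Ioo (0 : ℝ) 1 • (sphere (0 : E) 1 ∩ A)) := by
    have hpreimage_eq (B : Set E) : e ⁻¹' B = e.symm '' B := (e.symm.image_eq_preimage_symm B).symm
    have hsphere : sphere (0 : E) 1 ∩ e ⁻¹' A = e ⁻¹' (sphere 0 1 ∩ A) := by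
      rw [preimage_inter, e.preimage_sphere, map_zero]
    rw [hsphere, hpreimage_eq, hpreimage_eq, ← image2_smul, ← image2_smul]
    exact (image_image2_distrib_right fun r y => map_smul e.symm r y).symm
  rw [Measure.map_apply e.continuous.measurable hA, hcone _ hA,
    hcone _ (e.continuous.measurable hA), hpreimage,
    e.measurePreserving.measure_preimage_emb e.toHomeomorph.measurableEmbedding]

end ToSphere

section Hausdorff

variable {E : Type*} [NormedAddCommGroup E]

lemma setIntegral_sphere_hausdorffMeasure_eq_smul [NormedSpace ℝ E] [MeasurableSpace E]
    [BorelSpace E] {F : Type*} [NormedAddCommGroup F] [NormedSpace ℝ F] {s R : ℝ} (hs : 0 ≤ s)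
    (hR : 0 < R) (f : E → F) :
    ∫ η in sphere (0 : E) R, f η ∂μH[s] = R ^ s • ∫ ω in sphere (0 : E) 1, f (R • ω) ∂μH[s] := by
  have hmap : (μH[s] : Measure E).map (R • ·) = ‖R‖₊⁻¹ ^ s • μH[s] := by
    convert map_homothety_hausdorffMeasure hs (0 : E) hR.ne' using 2
    ext y
    simp [AffineMap.homothety_apply]
  have hpreimage : (R • ·) ⁻¹' sphere (0 : E) R = sphere 0 1 := by
    ext y
    simp [norm_smul, abs_of_pos hR, hR.ne']
  have hembedding : MeasurableEmbedding (R • · : E → E) :=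
    (Homeomorph.smulOfNeZero R hR.ne').measurableEmbedding
  rw [← hpreimage, ← hembedding.setIntegral_map, hmap, Measure.restrict_smul,
    integral_smul_nnreal_measure, NNReal.smul_def, smul_smul, NNReal.coe_rpow, NNReal.coe_inv,
    coe_nnnorm, Real.norm_of_nonneg hR.le, ← Real.mul_rpow hR.le (inv_nonneg.2 hR.le),
    mul_inv_cancel₀ hR.ne', Real.one_rpow, one_smul]

variable [InnerProductSpace ℝ E]

lemma rotationInvariant_hausdorffMeasure_restrict_sphere [MeasurableSpace E] [BorelSpace E]
    (s r : ℝ) : RotationInvariant ((μH[s] : Measure E).restrict (sphere 0 r)) := by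
  intro e
  have h := (e.toIsometryEquiv.measurePreserving_hausdorffMeasure s).restrict_preimage
    (isClosed_sphere (x := (0 : E)) (ε := r)).measurableSet
  rwa [LinearIsometryEquiv.coe_toIsometryEquiv, e.preimage_sphere, map_zero] at h

lemma hemisphere_subset_image_stereoInvFunAux {v : E} (hv : ‖v‖ = 1) :
    {y ∈ sphere (0 : E) 1 | inner ℝ v y ≤ 0} ⊆
      (fun w : (ℝ ∙ v)ᗮ => stereoInvFunAux v (w : E)) '' closedBall 0 2 := by
  rintro y ⟨hy, hvy⟩
  have hyv : y ≠ v := by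
    rintro rfl
    norm_num [hv] at hvy
  refine ⟨stereoToFun v y, ?_, congrArg Subtype.val (stereo_left_inv hv (x := ⟨y, hy⟩) hyv)⟩
  have hscale : ‖2 / (1 - inner ℝ v y)‖ ≤ 2 := by
    rw [Real.norm_of_nonneg (by positivity [sub_nonneg.2 (hvy.trans zero_le_one)])]
    exact div_le_self zero_le_two (by linarith)
  have hproj : ‖(ℝ ∙ v)ᗮ.orthogonalProjectionOnto y‖ ≤ 1 :=
    ((ℝ ∙ v)ᗮ.norm_orthogonalProjectionOnto_apply_le y).trans_eq (by simpa using hy)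
  rw [mem_closedBall_zero_iff, stereoToFun_apply, norm_smul]
  exact (mul_le_mul hscale hproj (norm_nonneg _) zero_le_two).trans_eq (mul_one 2)

lemma ball_subset_orthogonalProjectionOnto_image_sphere {v : E} (hv : ‖v‖ = 1) :
    ball 0 1 ⊆ (ℝ ∙ v)ᗮ.orthogonalProjectionOnto '' sphere (0 : E) 1 := by
  intro w hw
  have hw1 : ‖w‖ < 1 := by simpa using hw
  have horth : inner ℝ (w : E) (√(1 - ‖w‖ ^ 2) • v) = 0 := by
    rw [inner_smul_right, Submodule.mem_orthogonal_singleton_iff_inner_left.1 w.2, mul_zero]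
  refine ⟨w + √(1 - ‖w‖ ^ 2) • v, ?_, ?_⟩
  · rw [mem_sphere_zero_iff_norm, ← sq_eq_sq₀ (norm_nonneg _) zero_le_one,
      sq, norm_add_sq_eq_norm_sq_add_norm_sq_real horth, norm_smul, hv,
      Real.norm_of_nonneg (Real.sqrt_nonneg _), mul_one,
      Real.mul_self_sqrt (by nlinarith [norm_nonneg w]), Submodule.coe_norm]
    ring
  · simp [Submodule.orthogonalProjectionOnto_orthogonalComplement_singleton_eq_zero]

variable [FiniteDimensional ℝ E]

lemma finrank_orthogonal_span_singleton_eq_sub_one {v : E} (hv : v ≠ 0) :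
    (finrank ℝ (ℝ ∙ v)ᗮ : ℝ) = finrank ℝ E - 1 := by
  have hsum := (ℝ ∙ v).finrank_add_finrank_orthogonal
  rw [finrank_span_singleton hv] at hsum
  rw [← hsum, Nat.cast_add, Nat.cast_one, add_sub_cancel_left]

variable [MeasurableSpace E] [BorelSpace E]

lemma hausdorffMeasure_hemisphere_lt_top {v : E} (hv : ‖v‖ = 1) :
    μH[(finrank ℝ E : ℝ) - 1] {y ∈ sphere (0 : E) 1 | inner ℝ v y ≤ 0} < ∞ := by
  have hsmooth : ContDiff ℝ 1 fun w : (ℝ ∙ v)ᗮ => stereoInvFunAux v (w : E) :=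
    contDiff_stereoInvFunAux.comp (ℝ ∙ v)ᗮ.subtypeL.contDiff
  obtain ⟨K, hK⟩ := hsmooth.locallyLipschitz.locallyLipschitzOn.exists_lipschitzOnWith_of_compact
    (isCompact_closedBall 0 2)
  refine (measure_mono (hemisphere_subset_image_stereoInvFunAux hv)).trans_lt ?_
  rw [← finrank_orthogonal_span_singleton_eq_sub_one (ne_zero_of_norm_ne_zero (hv ▸ one_ne_zero))]
  refine (hK.hausdorffMeasure_image_le (Nat.cast_nonneg _)).trans_lt (ENNReal.mul_lt_top ?_ ?_)
  · exact ENNReal.rpow_lt_top_of_nonneg (Nat.cast_nonneg _) ENNReal.coe_ne_top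
  · exact (isCompact_closedBall _ _).measure_lt_top

variable [Nontrivial E]

theorem hausdorffMeasure_sphere_lt_top : μH[(finrank ℝ E : ℝ) - 1] (sphere (0 : E) 1) < ∞ := by
  obtain ⟨v, hv⟩ := exists_norm_eq E zero_le_one
  refine (measure_mono fun y hy => ?_).trans_lt (measure_union_lt_top
    (hausdorffMeasure_hemisphere_lt_top hv)
    (hausdorffMeasure_hemisphere_lt_top ((norm_neg v).trans hv)))
  rcases le_total (inner ℝ v y) 0 with hvy | hvy
  · exact .inl ⟨hy, hvy⟩
  · exact .inr ⟨hy, by simpa using hvy⟩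

theorem hausdorffMeasure_sphere_pos : 0 < μH[(finrank ℝ E : ℝ) - 1] (sphere (0 : E) 1) := by
  obtain ⟨v, hv⟩ := exists_norm_eq E zero_le_one
  rw [← finrank_orthogonal_span_singleton_eq_sub_one (ne_zero_of_norm_ne_zero (hv ▸ one_ne_zero))]
  calc 0 < μH[finrank ℝ (ℝ ∙ v)ᗮ] (ball (0 : (ℝ ∙ v)ᗮ) 1) := measure_ball_pos _ _ one_pos
    _ ≤ μH[finrank ℝ (ℝ ∙ v)ᗮ] ((ℝ ∙ v)ᗮ.orthogonalProjectionOnto '' sphere (0 : E) 1) :=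
        measure_mono (ball_subset_orthogonalProjectionOnto_image_sphere hv)
    _ ≤ μH[finrank ℝ (ℝ ∙ v)ᗮ] (sphere (0 : E) 1) :=
        hausdorffMeasure_orthogonalProjectionOnto_le _ _ _ (Nat.cast_nonneg _)

lemma hausdorffMeasure_real_sphere_pos :
    0 < μH[(finrank ℝ E : ℝ) - 1].real (sphere (0 : E) 1) :=
  ENNReal.toReal_pos hausdorffMeasure_sphere_pos.ne' hausdorffMeasure_sphere_lt_top.ne

theorem average_toSphere_eq_setAverage_hausdorffMeasure {F : Type*} [NormedAddCommGroup F]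
    [NormedSpace ℝ F] (f : E → F) :
    ⨍ ω : sphere (0 : E) 1, f ω ∂(volume : Measure E).toSphere =
      ⨍ ω in sphere (0 : E) 1, f ω ∂μH[(finrank ℝ E : ℝ) - 1] := by
  have hval : MeasurableEmbedding (Subtype.val : sphere (0 : E) 1 → E) :=
    .subtype_coe isClosed_sphere.measurableSet
  have hfinite : IsFiniteMeasure (μH[(finrank ℝ E : ℝ) - 1].restrict (sphere (0 : E) 1)) :=
    isFiniteMeasure_restrict.2 hausdorffMeasure_sphere_lt_top.ne
  have hne : NeZero (μH[(finrank ℝ E : ℝ) - 1].restrict (sphere (0 : E) 1)) :=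
    ⟨mt Measure.restrict_eq_zero.1 hausdorffMeasure_sphere_pos.ne'⟩
  have hne' : NeZero ((volume : Measure E).toSphere.map Subtype.val) := by
    rw [neZero_iff, Ne, Measure.map_eq_zero_iff hval.measurable.aemeasurable]
    exact Measure.toSphere_ne_zero _
  have hnorm : ∀ᵐ x ∂(volume : Measure E).toSphere.map Subtype.val, ‖x‖ = 1 :=
    hval.ae_map_iff.2 (.of_forall norm_eq_of_mem_sphere)
  have hnormalized := rotationInvariant_map_toSphere.normalized_eq
    (rotationInvariant_hausdorffMeasure_restrict_sphere ((finrank ℝ E : ℝ) - 1) 1)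
    hnorm (ae_restrict_of_forall_mem isClosed_sphere.measurableSet fun x hx => by simpa using hx)
  calc ⨍ ω : sphere (0 : E) 1, f ω ∂(volume : Measure E).toSphere
      = ⨍ y, f y ∂(volume : Measure E).toSphere.map Subtype.val := by
        rw [average_eq, average_eq, hval.integral_map,
          map_measureReal_apply hval.measurable .univ, preimage_univ]
    _ = ⨍ ω in sphere (0 : E) 1, f ω ∂μH[(finrank ℝ E : ℝ) - 1] := by
        rw [average, hnormalized, ← average]

end Hausdorff

section PolarCoordinates

variable {E F : Type*} [NormedAddCommGroup E] [NormedSpace ℝ E] [FiniteDimensional ℝ E]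
  [MeasurableSpace E] [BorelSpace E] [NormedAddCommGroup F]

variable (μ : Measure E) [μ.IsAddHaarMeasure]

lemma integrable_prod_toSphere_volumeIoiPow {g : E → F} (hg : Integrable g μ) :
    Integrable (fun p : sphere (0 : E) 1 × Ioi (0 : ℝ) => g (p.2.1 • p.1.1))
      (μ.toSphere.prod (.volumeIoiPow (finrank ℝ E - 1))) := by
  have h := μ.measurePreserving_homeomorphUnitSphereProd.symm
    (homeomorphUnitSphereProd E).toMeasurableEquiv |>.integrable_comp_emb
    (homeomorphUnitSphereProd E).symm.measurableEmbedding (g := g ∘ Subtype.val)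
  refine h.2 ?_
  rw [← integrableOn_iff_comap_subtypeVal (measurableSet_singleton _).compl]
  exact hg.integrableOn

variable [NormedSpace ℝ F]

lemma integral_volumeIoiPow (n : ℕ) (f : ℝ → F) :
    ∫ r : Ioi (0 : ℝ), f r ∂Measure.volumeIoiPow n = ∫ r in Ioi (0 : ℝ), r ^ n • f r := by
  rw [Measure.volumeIoiPow, integral_withDensity_eq_integral_toReal_smul (by fun_prop) (by simp),
    integral_subtype_comap measurableSet_Ioi fun r => (ENNReal.ofReal (r ^ n)).toReal • f r]
  refine setIntegral_congr_fun measurableSet_Ioi fun r hr => ?_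
  simp only [ENNReal.toReal_ofReal (pow_nonneg (le_of_lt hr) n)]

variable [Nontrivial E]

lemma integral_prod_toSphere_volumeIoiPow (g : E → F) :
    ∫ p : sphere (0 : E) 1 × Ioi (0 : ℝ), g (p.2.1 • p.1.1)
      ∂μ.toSphere.prod (.volumeIoiPow (finrank ℝ E - 1)) = ∫ y, g y ∂μ := by
  have h := μ.measurePreserving_homeomorphUnitSphereProd.symm
    (homeomorphUnitSphereProd E).toMeasurableEquiv |>.integral_comp
    (homeomorphUnitSphereProd E).symm.measurableEmbedding (g ∘ Subtype.val)
  simp only [Function.comp_apply] at h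
  rw [integral_subtype_comap (measurableSet_singleton _).compl g, restrict_compl_singleton] at h
  exact h

theorem integral_eq_integral_toSphere_integral_Ioi {g : E → F} (hg : Integrable g μ) :
    ∫ y, g y ∂μ =
      ∫ ω : sphere (0 : E) 1, (∫ r in Ioi (0 : ℝ), r ^ (finrank ℝ E - 1) • g (r • ω.1))
        ∂μ.toSphere := by
  rw [← integral_prod_toSphere_volumeIoiPow μ g,
    integral_prod _ (integrable_prod_toSphere_volumeIoiPow μ hg)]
  exact integral_congr_ae (.of_forall fun ω => integral_volumeIoiPow _ fun r => g (r • ω.1))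

theorem integral_eq_integral_Ioi_integral_toSphere {g : E → F} (hg : Integrable g μ) :
    ∫ y, g y ∂μ =
      ∫ r in Ioi (0 : ℝ), r ^ (finrank ℝ E - 1) • ∫ ω : sphere (0 : E) 1, g (r • ω.1)
        ∂μ.toSphere := by
  rw [← integral_prod_toSphere_volumeIoiPow μ g,
    integral_prod_symm _ (integrable_prod_toSphere_volumeIoiPow μ hg),
    integral_volumeIoiPow _ fun r => ∫ ω : sphere (0 : E) 1, g (r • ω.1) ∂μ.toSphere]

lemma setIntegral_shell_eq_intervalIntegral {f : E → F} {a b : ℝ} (ha : 0 ≤ a) (hab : a ≤ b)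
    (hf : IntegrableOn f (norm ⁻¹' Ioc a b) μ) :
    ∫ y in norm ⁻¹' Ioc a b, f y ∂μ =
      ∫ r in a..b, r ^ (finrank ℝ E - 1) • ∫ ω : sphere (0 : E) 1, f (r • ω.1) ∂μ.toSphere := by
  have hshell : MeasurableSet ((norm : E → ℝ) ⁻¹' Ioc a b) := measurable_norm measurableSet_Ioc
  rw [← integral_indicator hshell,
    integral_eq_integral_Ioi_integral_toSphere μ (hf.integrable_indicator hshell),
    intervalIntegral.integral_of_le hab,
    ← inter_eq_right.2 (Ioc_subset_Ioi_self.trans (Ioi_subset_Ioi ha)),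
    ← setIntegral_indicator measurableSet_Ioc]
  refine setIntegral_congr_fun measurableSet_Ioi fun r (hr : 0 < r) => ?_
  have hnorm (ω : sphere (0 : E) 1) : ‖r • ω.1‖ = r := by
    rw [norm_smul, norm_eq_of_mem_sphere, mul_one, Real.norm_of_nonneg hr.le]
  by_cases hr' : r ∈ Ioc a b <;> simp [indicator, hnorm, hr, hr']

end PolarCoordinates

section EqOn

variable {F : Type*} [NormedAddCommGroup F] [NormedSpace ℝ F] [CompleteSpace F]

lemma eqOn_Ioi_of_intervalIntegral_eq {f g : ℝ → F} {c : ℝ}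
    (hf : ContinuousOn f (Ioi c)) (hg : ContinuousOn g (Ioi c))
    (hfg : ∀ ⦃a b⦄, c < a → a ≤ b → ∫ r in a..b, f r = ∫ r in a..b, g r) : EqOn f g (Ioi c) := by
  intro r (hr : c < r)
  obtain ⟨a, hca, har⟩ := exists_between hr
  have hderiv {h : ℝ → F} (hh : ContinuousOn h (Ioi c)) :
      HasDerivAt (fun u => ∫ s in a..u, h s) (h r) r :=
    intervalIntegral.integral_hasDerivAt_right
      ((hh.mono fun s hs => hca.trans_le (uIcc_of_le har.le ▸ hs).1).intervalIntegrable)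
      (hh.stronglyMeasurableAtFilter isOpen_Ioi r hr) (hh.continuousAt (Ioi_mem_nhds hr))
  refine (hderiv hf).unique ((hderiv hg).congr_of_eventuallyEq ?_)
  filter_upwards [Ioi_mem_nhds har] with u hu using hfg hca (le_of_lt hu)

end EqOn

section PoissonKernel

variable {E : Type*} [NormedAddCommGroup E] [InnerProductSpace ℝ E]

/-- The interior Poisson kernel of the ball of radius `‖y‖` about the origin, at `x` in the ball and
`y` on its boundary, without the factor `1 / (Ω_d ‖y‖)`. Leaving the radius free allows integration
over shells. -/
noncomputable def unnormalizedPoissonKernel (x y : E) : ℝ :=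
  (‖y‖ ^ 2 - ‖x‖ ^ 2) / ‖x - y‖ ^ finrank ℝ E

/-- The distance from a point `x` of the closed ball of radius `c` about the origin to the boundary
of that ball, along the unit vector `ω`; its role is to give the limits of radial integrals in polar
coordinates centred at `x`. -/
noncomputable def exitDistance (x ω : E) (c : ℝ) : ℝ :=
  √(c ^ 2 - ‖x‖ ^ 2 + inner ℝ x ω ^ 2) - inner ℝ x ω

variable {x ω : E} {a b c r : ℝ}

lemma continuous_exitDistance (x : E) (c : ℝ) : Continuous fun ω => exitDistance x ω c := by
  unfold exitDistance
  fun_prop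

lemma exitDistance_neg (x ω : E) (c : ℝ) :
    exitDistance x (-ω) c = exitDistance x ω c + 2 * inner ℝ x ω := by
  rw [exitDistance, exitDistance, inner_neg_right]
  ring_nf

lemma exitDistance_sq (hx : ‖x‖ ≤ c) :
    exitDistance x ω c ^ 2 + 2 * inner ℝ x ω * exitDistance x ω c = c ^ 2 - ‖x‖ ^ 2 := by
  have hsqrt : √(c ^ 2 - ‖x‖ ^ 2 + inner ℝ x ω ^ 2) ^ 2 = c ^ 2 - ‖x‖ ^ 2 + inner ℝ x ω ^ 2 :=
    Real.sq_sqrt (by nlinarith [norm_nonneg x, sq_nonneg (inner ℝ x ω)])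
  rw [exitDistance]
  linear_combination hsqrt

lemma norm_add_smul_sq (hω : ‖ω‖ = 1) :
    ‖x + r • ω‖ ^ 2 = ‖x‖ ^ 2 + 2 * inner ℝ x ω * r + r ^ 2 := by
  rw [norm_add_sq_real, inner_smul_right, norm_smul, hω, mul_one, Real.norm_eq_abs, sq_abs]
  ring

lemma norm_add_smul_le_iff_le_exitDistance (hx : ‖x‖ ≤ c) (hω : ‖ω‖ = 1) (hr : 0 ≤ r) :
    ‖x + r • ω‖ ≤ c ↔ r ≤ exitDistance x ω c := by
  have hcx : ‖x‖ ^ 2 ≤ c ^ 2 := pow_le_pow_left₀ (norm_nonneg x) hx 2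
  have hnonneg : 0 ≤ c ^ 2 - ‖x‖ ^ 2 + inner ℝ x ω ^ 2 := by
    linarith [sq_nonneg (inner ℝ x ω)]
  have hlower : -√(c ^ 2 - ‖x‖ ^ 2 + inner ℝ x ω ^ 2) ≤ r + inner ℝ x ω :=
    (Real.neg_sqrt_le_of_sq_le (by linarith)).trans (le_add_of_nonneg_left hr)
  calc ‖x + r • ω‖ ≤ c ↔ ‖x + r • ω‖ ^ 2 ≤ c ^ 2 :=
        (sq_le_sq₀ (norm_nonneg _) ((norm_nonneg x).trans hx)).symm
    _ ↔ (r + inner ℝ x ω) ^ 2 ≤ c ^ 2 - ‖x‖ ^ 2 + inner ℝ x ω ^ 2 := by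
        rw [norm_add_smul_sq hω, ← sub_nonneg, ← sub_nonneg (b := (r + _) ^ 2)]
        ring_nf
    _ ↔ r + inner ℝ x ω ≤ √(c ^ 2 - ‖x‖ ^ 2 + inner ℝ x ω ^ 2) := by
        rw [Real.sq_le hnonneg, and_iff_right hlower]
    _ ↔ r ≤ exitDistance x ω c := le_sub_iff_add_le.symm

lemma exitDistance_nonneg (hx : ‖x‖ ≤ c) (hω : ‖ω‖ = 1) : 0 ≤ exitDistance x ω c :=
  (norm_add_smul_le_iff_le_exitDistance hx hω le_rfl).1 (by simpa using hx)

lemma exitDistance_le_exitDistance (hx : ‖x‖ ≤ a) (hab : a ≤ b) :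
    exitDistance x ω a ≤ exitDistance x ω b := by
  have hsq : a ^ 2 ≤ b ^ 2 := pow_le_pow_left₀ ((norm_nonneg x).trans hx) hab 2
  unfold exitDistance
  gcongr

lemma continuousOn_unnormalizedPoissonKernel (x : E) :
    ContinuousOn (unnormalizedPoissonKernel x) {x}ᶜ :=
  ContinuousOn.div (by fun_prop) (by fun_prop) fun y hy =>
    pow_ne_zero _ (norm_ne_zero_iff.2 (sub_ne_zero.2 (Ne.symm hy)))

lemma pow_mul_unnormalizedPoissonKernel_add_smul [FiniteDimensional ℝ E] [Nontrivial E]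
    (hω : ‖ω‖ = 1) (hr : 0 < r) :
    r ^ (finrank ℝ E - 1) * unnormalizedPoissonKernel x (x + r • ω) = r + 2 * inner ℝ x ω := by
  have hpow : r ^ finrank ℝ E = r ^ (finrank ℝ E - 1) * r :=
    (pow_sub_one_mul finrank_pos.ne' r).symm
  rw [unnormalizedPoissonKernel, norm_add_smul_sq hω, sub_add_cancel_left, norm_neg, norm_smul, hω,
    mul_one, Real.norm_of_nonneg hr.le, hpow]
  field_simp
  ring

lemma integral_Ioi_pow_mul_indicator_shell_unnormalizedPoissonKernel [FiniteDimensional ℝ E]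
    [Nontrivial E] (hx : ‖x‖ ≤ a) (hab : a ≤ b) (hω : ‖ω‖ = 1) :
    ∫ r in Ioi (0 : ℝ), r ^ (finrank ℝ E - 1) *
        (norm ⁻¹' Ioc a b).indicator (unnormalizedPoissonKernel x) (x + r • ω) =
      (b ^ 2 - a ^ 2) / 2 + inner ℝ x ω * (exitDistance x ω b - exitDistance x ω a) := by
  have hxb : ‖x‖ ≤ b := hx.trans hab
  set I := Ioc (exitDistance x ω a) (exitDistance x ω b)
  have hsubset : I ⊆ Ioi 0 :=
    Ioc_subset_Ioi_self.trans (Ioi_subset_Ioi (exitDistance_nonneg hx hω))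
  have hmem {r : ℝ} (hr : 0 < r) : x + r • ω ∈ norm ⁻¹' Ioc a b ↔ r ∈ I := by
    rw [mem_preimage, mem_Ioc, mem_Ioc, norm_add_smul_le_iff_le_exitDistance hxb hω hr.le,
      ← not_le, norm_add_smul_le_iff_le_exitDistance hx hω hr.le, not_le]
  calc ∫ r in Ioi (0 : ℝ), r ^ (finrank ℝ E - 1) *
        (norm ⁻¹' Ioc a b).indicator (unnormalizedPoissonKernel x) (x + r • ω)
      = ∫ r in Ioi (0 : ℝ), I.indicator (fun r => r + 2 * inner ℝ x ω) r := by
        refine setIntegral_congr_fun measurableSet_Ioi fun r (hr : 0 < r) => ?_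
        by_cases hrI : r ∈ I
        · simp only [indicator_of_mem hrI, indicator_of_mem ((hmem hr).2 hrI),
            pow_mul_unnormalizedPoissonKernel_add_smul hω hr]
        · simp only [indicator_of_notMem hrI, indicator_of_notMem (mt (hmem hr).1 hrI), mul_zero]
    _ = ∫ r in exitDistance x ω a..exitDistance x ω b, (r + 2 * inner ℝ x ω) := by
        rw [setIntegral_indicator measurableSet_Ioc, inter_eq_right.2 hsubset,
          intervalIntegral.integral_of_le (exitDistance_le_exitDistance hx hab)]
    _ = (b ^ 2 - a ^ 2) / 2 + inner ℝ x ω * (exitDistance x ω b - exitDistance x ω a) := by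
        rw [intervalIntegral.integral_add (by simp) (by simp), integral_id,
          intervalIntegral.integral_const, smul_eq_mul]
        linear_combination
          (exitDistance_sq (ω := ω) hxb - exitDistance_sq (ω := ω) hx) / 2

variable [FiniteDimensional ℝ E] [MeasurableSpace E] [BorelSpace E]

lemma integrableOn_shell_unnormalizedPoissonKernel (μ : Measure E)
    [IsFiniteMeasureOnCompacts μ] (hxa : ‖x‖ < a) (b : ℝ) :
    IntegrableOn (unnormalizedPoissonKernel x) (norm ⁻¹' Ioc a b) μ := by
  have hcompact : IsCompact ((norm : E → ℝ) ⁻¹' Icc a b) :=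
    (isCompact_closedBall (0 : E) b).of_isClosed_subset (isClosed_Icc.preimage continuous_norm)
      fun y hy => mem_closedBall_zero_iff.2 hy.2
  have hcontinuous : ContinuousOn (unnormalizedPoissonKernel x) (norm ⁻¹' Icc a b) :=
    (continuousOn_unnormalizedPoissonKernel x).mono fun y hy hyx => hxa.not_ge (hyx ▸ hy.1)
  exact (hcontinuous.integrableOn_compact hcompact).mono_set (preimage_mono Ioc_subset_Icc_self)

lemma continuousOn_integral_toSphere_unnormalizedPoissonKernel (x : E) :
    ContinuousOn (fun r : ℝ => ∫ ω : sphere (0 : E) 1, unnormalizedPoissonKernel x (r • ω.1)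
      ∂(volume : Measure E).toSphere) (Ioi ‖x‖) := by
  refine continuousOn_integral_of_compact_support isCompact_univ ?_ (by simp)
  refine (continuousOn_unnormalizedPoissonKernel x).comp (by fun_prop) ?_
  rintro ⟨r, ω⟩ ⟨hr : ‖x‖ < r, -⟩ (rfl : r • ω.1 = x)
  rw [norm_smul, norm_eq_of_mem_sphere, mul_one] at hr
  exact hr.not_ge (le_abs_self r)

variable [Nontrivial E]

lemma setIntegral_shell_unnormalizedPoissonKernel (hx : ‖x‖ < a) (hab : a ≤ b) :
    ∫ y in norm ⁻¹' Ioc a b, unnormalizedPoissonKernel x y =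
      (volume : Measure E).toSphere.real univ * ((b ^ 2 - a ^ 2) / 2) := by
  set f := (norm ⁻¹' Ioc a b).indicator (unnormalizedPoissonKernel x)
  set g := fun ω => inner ℝ x ω * (exitDistance x ω b - exitDistance x ω a)
  have hshell : MeasurableSet ((norm : E → ℝ) ⁻¹' Ioc a b) := measurable_norm measurableSet_Ioc
  have hf : Integrable f :=
    (integrableOn_shell_unnormalizedPoissonKernel volume hx b).integrable_indicator hshell
  have hg : Continuous g := by
    have := continuous_exitDistance x
    fun_prop
  have hodd : g.Odd := fun ω => by
    simp only [g, inner_neg_right, exitDistance_neg]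
    ring
  have hzero : ∫ ω : sphere (0 : E) 1, g ω ∂(volume : Measure E).toSphere = 0 := by
    rw [← (MeasurableEmbedding.subtype_coe isClosed_sphere.measurableSet).integral_map,
      rotationInvariant_map_toSphere.integral_eq_zero_of_odd hodd]
  have hg_integrable : Integrable (fun ω : sphere (0 : E) 1 => g ω)
      (volume : Measure E).toSphere :=
    (hg.comp continuous_subtype_val).integrable_of_hasCompactSupport (.of_compactSpace _)
  calc ∫ y in norm ⁻¹' Ioc a b, unnormalizedPoissonKernel x y
      = ∫ y, f (x + y) := by rw [integral_add_left_eq_self, integral_indicator hshell]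
    _ = ∫ ω : sphere (0 : E) 1, (∫ r in Ioi (0 : ℝ), r ^ (finrank ℝ E - 1) • f (x + r • ω.1))
          ∂(volume : Measure E).toSphere :=
        integral_eq_integral_toSphere_integral_Ioi volume (hf.comp_add_left x)
    _ = ∫ ω : sphere (0 : E) 1, ((b ^ 2 - a ^ 2) / 2 + g ω) ∂(volume : Measure E).toSphere :=
        integral_congr_ae <| .of_forall fun ω =>
          integral_Ioi_pow_mul_indicator_shell_unnormalizedPoissonKernel hx.le hab
            (norm_eq_of_mem_sphere ω)
    _ = (volume : Measure E).toSphere.real univ * ((b ^ 2 - a ^ 2) / 2) := by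
        rw [integral_add (integrable_const _) hg_integrable, hzero, integral_const, smul_eq_mul,
          add_zero]

theorem pow_mul_average_toSphere_unnormalizedPoissonKernel {R : ℝ} (hx : ‖x‖ < R) :
    R ^ (finrank ℝ E - 1) * ⨍ ω : sphere (0 : E) 1, unnormalizedPoissonKernel x (R • ω.1)
      ∂(volume : Measure E).toSphere = R := by
  set σ := (volume : Measure E).toSphere
  have hσ : σ.real univ ≠ 0 := by
    have : NeZero σ := ⟨Measure.toSphere_ne_zero _⟩
    exact measureReal_univ_ne_zero
  have hradial : EqOn (fun r => r ^ (finrank ℝ E - 1) *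
      ∫ ω : sphere (0 : E) 1, unnormalizedPoissonKernel x (r • ω.1) ∂σ)
      (fun r => σ.real univ * r) (Ioi ‖x‖) := by
    refine eqOn_Ioi_of_intervalIntegral_eq
      (.mul (by fun_prop) (continuousOn_integral_toSphere_unnormalizedPoissonKernel x))
      (by fun_prop) fun a b hxa hab => ?_
    have hpolar := setIntegral_shell_eq_intervalIntegral volume ((norm_nonneg x).trans hxa.le) hab
      (integrableOn_shell_unnormalizedPoissonKernel volume hxa b)
    rw [intervalIntegral.integral_const_mul, integral_id,
      ← setIntegral_shell_unnormalizedPoissonKernel hxa hab, hpolar]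
    rfl
  rw [average_eq, smul_eq_mul, mul_left_comm]
  exact (congrArg ((σ.real univ)⁻¹ * ·) (hradial hx)).trans (inv_mul_cancel_left₀ hσ R)

end PoissonKernel

section SphereIntegral

variable {E : Type*} [NormedAddCommGroup E] [InnerProductSpace ℝ E] [FiniteDimensional ℝ E]
  [Nontrivial E] [MeasurableSpace E] [BorelSpace E]

theorem setIntegral_sphere_unnormalizedPoissonKernel {x : E} {R : ℝ} (hx : ‖x‖ < R) :
    ∫ η in sphere (0 : E) R, unnormalizedPoissonKernel x η ∂μH[(finrank ℝ E : ℝ) - 1] =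
      μH[(finrank ℝ E : ℝ) - 1].real (sphere (0 : E) 1) * R := by
  have hs : 0 ≤ (finrank ℝ E : ℝ) - 1 := sub_nonneg.2 (Nat.one_le_cast.2 finrank_pos)
  have hpow : R ^ ((finrank ℝ E : ℝ) - 1) = R ^ (finrank ℝ E - 1) := by
    rw [← Nat.cast_pred finrank_pos, Real.rpow_natCast]
  calc ∫ η in sphere (0 : E) R, unnormalizedPoissonKernel x η ∂μH[(finrank ℝ E : ℝ) - 1]
      = R ^ ((finrank ℝ E : ℝ) - 1) • ∫ ω in sphere (0 : E) 1,
          unnormalizedPoissonKernel x (R • ω) ∂μH[(finrank ℝ E : ℝ) - 1] :=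
        setIntegral_sphere_hausdorffMeasure_eq_smul hs ((norm_nonneg x).trans_lt hx) _
    _ = R ^ (finrank ℝ E - 1) * (μH[(finrank ℝ E : ℝ) - 1].real (sphere (0 : E) 1) *
          ⨍ ω : sphere (0 : E) 1, unnormalizedPoissonKernel x (R • ω.1)
            ∂(volume : Measure E).toSphere) := by
        rw [average_toSphere_eq_setAverage_hausdorffMeasure
            fun ω => unnormalizedPoissonKernel x (R • ω), setAverage_eq, smul_eq_mul, smul_eq_mul,
          mul_inv_cancel_left₀ hausdorffMeasure_real_sphere_pos.ne', hpow]
    _ = μH[(finrank ℝ E : ℝ) - 1].real (sphere (0 : E) 1) * R := by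
        rw [mul_left_comm, pow_mul_average_toSphere_unnormalizedPoissonKernel hx]

theorem interior_poisson_kernel_integral_eq_one_general {x : E} {R : ℝ} (hx : ‖x‖ < R) :
    ∫ η in sphere (0 : E) R, (R ^ 2 - ‖x‖ ^ 2) /
        ((μH[(finrank ℝ E : ℝ) - 1] (sphere (0 : E) 1)).toReal * R * ‖x - η‖ ^ finrank ℝ E)
      ∂μH[(finrank ℝ E : ℝ) - 1] = 1 := by
  have hR : 0 < R := (norm_nonneg x).trans_lt hx
  set Ω := μH[(finrank ℝ E : ℝ) - 1].real (sphere (0 : E) 1)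
  calc ∫ η in sphere (0 : E) R, (R ^ 2 - ‖x‖ ^ 2) / (Ω * R * ‖x - η‖ ^ finrank ℝ E)
        ∂μH[(finrank ℝ E : ℝ) - 1]
      = ∫ η in sphere (0 : E) R, (Ω * R)⁻¹ * unnormalizedPoissonKernel x η
          ∂μH[(finrank ℝ E : ℝ) - 1] := by
        refine setIntegral_congr_fun isClosed_sphere.measurableSet fun η hη => ?_
        rw [unnormalizedPoissonKernel, mem_sphere_zero_iff_norm.1 hη]
        field_simp
    _ = 1 := by
        rw [integral_const_mul, setIntegral_sphere_unnormalizedPoissonKernel hx,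
          inv_mul_cancel₀ (mul_pos hausdorffMeasure_real_sphere_pos hR).ne']

end SphereIntegral

/-- Let `d ≥ 2` and `R > 0`.  For every `x ∈ ℝ^d` with `‖x‖ < R`, the interior
Poisson kernel `K(x,η) = (R² - ‖x‖²)/(Ω_d R ‖x - η‖^d)` integrates to one over the sphere
`Σ_R = {‖η‖ = R}` with respect to the `(d-1)`-dimensional surface (Hausdorff) measure `σ`. -/
theorem interior_poisson_kernel_integral_eq_one
    (d : ℕ) (hd : 2 ≤ d) (R : ℝ) (hR : 0 < R)
    (x : EuclideanSpace ℝ (Fin d)) (hx : ‖x‖ < R) :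
    ∫ η in Metric.sphere (0 : EuclideanSpace ℝ (Fin d)) R,
        (R ^ 2 - ‖x‖ ^ 2) / (unitSphereArea d * R * ‖x - η‖ ^ d)
      ∂(μH[(d : ℝ) - 1]) = 1 := by
  have : NeZero d := ⟨by lia⟩
  simpa only [unitSphereArea, finrank_euclideanSpace_fin] using
    interior_poisson_kernel_integral_eq_one_general hx
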